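/- arXiv:2502.13331 — 3 statements merged into one kernel-verified Lean document; each statement's English description precedes it below -/
import Mathlib

section
/- Let q be an odd prime power with q ≡ 1 (mod 4), let k be a divisor of q−1 with 3 < k < q−1, and suppose e = (q−1)/k is even. If (q,k) gives a 3-design, then k is congruent to 1, 2, 5, 10, 13, or 17 modulo 24. -/
/-!
Setting: `F` is a finite field of order `q`. The projective line `PG(1,q)` is
modelled as `Projectivization F (Fin 2 → F)`. Since scalar matrices act trivially
on the projective line, the images of a set under all elements of `SL(2,F)` form
exactly its `PSL(2,F)`-orbit; `mapSL g` is the map of the projective line induced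
by `g : SL(2,F)`. For `k ∣ q - 1`, the unique subgroup of order `k` of `Fˣ` is the
set of `k`-th roots of unity `{x : F | x ^ k = 1}`, embedded into the projective
line via `x ↦ [x : 1]`. `(q, k)` gives a 3-design iff there is `lam > 0` such that
every 3-subset of the projective line lies in exactly `lam` blocks of the orbit.
-/

noncomputable section

open Matrix

/-- The point at infinity `[1 : 0]` of the projective line over `F`. -/
def inftyPt (F : Type) [Field F] : Projectivization F (Fin 2 → F) :=
  Projectivization.mk F ![1, 0] (by
    intro h
    simpa using congrFun h 0)

/-- The embedding of `F` into the projective line, `x ↦ [x : 1]`. -/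
def embedPt (F : Type) [Field F] (x : F) : Projectivization F (Fin 2 → F) :=
  Projectivization.mk F ![x, 1] (by
    intro h
    simpa using congrFun h 1)

/-- The action of `g : SL(2,F)` on the projective line (as linear fractional
transformation). -/
def mapSL {F : Type} [Field F] (g : Matrix.SpecialLinearGroup (Fin 2) F) :
    Projectivization F (Fin 2 → F) → Projectivization F (Fin 2 → F) :=
  Projectivization.map (Matrix.SpecialLinearGroup.toLin' g : (Fin 2 → F) →ₗ[F] (Fin 2 → F))
    (Matrix.SpecialLinearGroup.toLin' g).injective

/-- The starter block: the unique subgroup of order `k` of `Fˣ` (the `k`-th roots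
of unity, for `k ∣ q - 1`), regarded as a subset of the projective line. -/
def starterB (F : Type) [Field F] (k : ℕ) : Set (Projectivization F (Fin 2 → F)) :=
  embedPt F '' {x : F | x ^ k = 1}

/-- The `PSL(2,F)`-orbit `GB` of the starter block. -/
def designBlocks (F : Type) [Field F] (k : ℕ) :
    Set (Set (Projectivization F (Fin 2 → F))) :=
  {S | ∃ g : Matrix.SpecialLinearGroup (Fin 2) F, S = mapSL g '' starterB F k}

/-- `GB` is the block set of a `3-(q+1, k, lam)` design: `lam` is positive and every
3-subset of the projective line is contained in exactly `lam` blocks. -/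
def isThreeDesign (F : Type) [Field F] (k lam : ℕ) : Prop :=
  0 < lam ∧
    ∀ T : Finset (Projectivization F (Fin 2 → F)), T.card = 3 →
      {S ∈ designBlocks F k | (T : Set (Projectivization F (Fin 2 → F))) ⊆ S}.ncard = lam

/-- `(q, k)` gives a 3-design. -/
def gives3Design (F : Type) [Field F] (k : ℕ) : Prop :=
  ∃ lam : ℕ, isThreeDesign F k lam

theorem orb_dvd {α : Type} [DecidableEq α] (s : Finset α) (n : ℕ) (orb : α → Finset α)
    (h1 : ∀ x ∈ s, orb x ⊆ s) (h2 : ∀ x ∈ s, x ∈ orb x) (h3 : ∀ x ∈ s, (orb x).card = n)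
    (h4 : ∀ x ∈ s, ∀ y ∈ orb x, orb y = orb x) : n ∣ s.card := by
  rw [Finset.card_eq_sum_card_image orb s]
  apply Finset.dvd_sum
  intro t ht
  obtain ⟨x, hx, rfl⟩ := Finset.mem_image.1 ht
  have : {y ∈ s | orb y = orb x} = orb x := by
    ext y
    simp only [Finset.mem_filter]
    exact ⟨fun ⟨hy, h⟩ => h ▸ h2 y hy, fun hy => ⟨h1 x hx hy, h4 x hx y hy⟩⟩
  rw [this, h3 x hx]

theorem inv2 {α : Type} [DecidableEq α] (s : Finset α) (σ : α → α)
    (h1 : ∀ x ∈ s, σ x ∈ s) (h2 : ∀ x ∈ s, σ (σ x) = x) (h3 : ∀ x ∈ s, σ x ≠ x) : 2 ∣ s.card := by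
  apply orb_dvd s 2 (fun x => {x, σ x})
  · intro x hx; simp [Finset.insert_subset_iff, hx, h1 x hx]
  · simp
  · intro x hx; exact Finset.card_pair (h3 x hx).symm
  · intro x hx y hy
    simp only [Finset.mem_insert, Finset.mem_singleton] at hy
    rcases hy with rfl | rfl
    · rfl
    · simp [h2 x hx, Finset.pair_comm]

theorem rot3 {α : Type} [DecidableEq α] (s : Finset α) (σ : α → α)
    (h1 : ∀ x ∈ s, σ x ∈ s) (h2 : ∀ x ∈ s, σ (σ (σ x)) = x) (h3 : ∀ x ∈ s, σ x ≠ x) :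
    3 ∣ s.card := by
  apply orb_dvd s 3 (fun x => {x, σ x, σ (σ x)})
  · intro x hx; simp [Finset.insert_subset_iff, hx, h1 x hx, h1 _ (h1 x hx)]
  · simp
  · intro x hx
    rw [Finset.card_eq_three]
    refine ⟨_, _, _, (h3 x hx).symm, ?_, (h3 _ (h1 x hx)).symm, rfl⟩
    intro h
    have := h2 x hx
    rw [← h] at this
    exact h3 x hx this
  · intro x hx y hy
    simp only [Finset.mem_insert, Finset.mem_singleton] at hy
    rcases hy with rfl | rfl | rfl
    · rfl
    · ext z; simp [h2 x hx]; tauto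
    · ext z; simp [h2 x hx]; tauto

theorem klein4 {α : Type} [DecidableEq α] (s : Finset α) (σ τ : α → α)
    (h1 : ∀ x ∈ s, σ x ∈ s) (h1' : ∀ x ∈ s, τ x ∈ s)
    (h2 : ∀ x ∈ s, σ (σ x) = x) (h2' : ∀ x ∈ s, τ (τ x) = x)
    (hc : ∀ x ∈ s, σ (τ x) = τ (σ x))
    (h3 : ∀ x ∈ s, σ x ≠ x) (h3' : ∀ x ∈ s, τ x ≠ x) (h3'' : ∀ x ∈ s, σ (τ x) ≠ x) :
    4 ∣ s.card := by
  apply orb_dvd s 4 (fun x => {x, σ x, τ x, σ (τ x)})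
  · intro x hx; simp [Finset.insert_subset_iff, hx, h1 x hx, h1' x hx, h1 _ (h1' x hx)]
  · simp
  · intro x hx
    have e1 : x ≠ σ x := (h3 x hx).symm
    have e2 : x ≠ τ x := (h3' x hx).symm
    have e3 : x ≠ σ (τ x) := (h3'' x hx).symm
    have e4 : σ x ≠ τ x := fun h => h3'' x hx (by rw [← h, h2 x hx])
    have e5 : σ x ≠ σ (τ x) := fun h => h3' _ (h1 x hx) (by rw [← hc x hx, ← h])
    have e6 : τ x ≠ σ (τ x) := (h3 _ (h1' x hx)).symm
    simp [Finset.card_insert_of_notMem, e1, e2, e3, e4, e5, e6]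
  · intro x hx y hy
    simp only [Finset.mem_insert, Finset.mem_singleton] at hy
    have a1 := h2 x hx
    have a2 := h2' x hx
    have a3 := hc x hx
    have a4 := h2' _ (h1 x hx)
    have a5 := h2 _ (h1' x hx)
    rcases hy with rfl | rfl | rfl | rfl
    · rfl
    · ext z; simp [a1, ← a3, a5]; tauto
    · ext z; simp [a2, a3]; tauto
    · have : σ (τ (σ (τ x))) = x := by rw [a3, a4, a1]
      have : τ (σ (τ x)) = σ x := by rw [a3, a4]
      ext z; simp [this, a1, a5]; tauto

theorem mod_arith (k : ℕ) (hk3 : 3 < k) (N Noff Nd Nr Nf : ℕ) (hN : 2 * N = (k-1)*(k-2))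
    (h1 : N = Noff + Nd) (h4 : 4 ∣ Noff) (h2 : 2 ∣ Nd) (h24 : k % 4 = 2 → 4 ∣ Nd)
    (h3 : N = Nr + Nf) (h33 : 3 ∣ Nr) (hf : k % 3 = 0 → Nf = 0 ∨ Nf = 2) :
    k % 24 = 1 ∨ k % 24 = 2 ∨ k % 24 = 5 ∨ k % 24 = 10 ∨ k % 24 = 13 ∨ k % 24 = 17 := by
  obtain ⟨t, rfl⟩ : ∃ t, k = t + 2 := ⟨k - 2, by omega⟩
  have e : (t + 2 - 1) * (t + 2 - 2) = (t+1)*t := by congr 1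
  rw [e] at hN
  have A : ((t+1)*t) % 4 = 0 := by omega
  have B : t % 4 = 0 → ((t+1)*t) % 8 = 0 := by omega
  have C : t % 3 = 1 → ((t+1)*t) % 3 ≠ 2 := by omega
  generalize hu : (t+1)*t = u at *
  have m8 : u % 8 = ((t % 8 + 1) * (t % 8)) % 8 := by rw [← hu]; simp [Nat.mul_mod, Nat.add_mod]
  have m3 : u % 3 = ((t % 3 + 1) * (t % 3)) % 3 := by rw [← hu]; simp [Nat.mul_mod, Nat.add_mod]
  have l8 : t % 8 < 8 := Nat.mod_lt _ (by norm_num)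
  have l3 : t % 3 < 3 := Nat.mod_lt _ (by norm_num)
  generalize ht8 : t % 8 = x at *
  generalize ht3 : t % 3 = y at *
  interval_cases x <;> interval_cases y <;> omega

theorem comb (F : Type) [Field F] [DecidableEq F] (k : ℕ) (hk3 : 3 < k)
    (B : Finset F) (hB : ∀ x, x ∈ B ↔ x ^ k = 1) (hcard : B.card = k)
    (χ : F →* ℤ) (h0 : ∀ x, χ x = 0 ↔ x = 0) (hpm : ∀ x, x ≠ 0 → χ x = 1 ∨ χ x = -1)
    (hneg : χ (-1) = 1) (hchar : (-1 : F) ≠ 1) (hsq : ∀ x ∈ B, χ x = 1)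
    (hsum : ∑ a ∈ B, ∑ b ∈ B, χ ((1 - a) * (1 - b) * (1 - a * b)) = 0) :
    k % 24 = 1 ∨ k % 24 = 2 ∨ k % 24 = 5 ∨ k % 24 = 10 ∨ k % 24 = 13 ∨ k % 24 = 17 := by
  have hk0 : k ≠ 0 := by omega
  have Bne : ∀ x ∈ B, x ≠ 0 := by
    rintro x hx rfl
    rw [hB, zero_pow hk0] at hx
    exact zero_ne_one hx
  have B1 : (1 : F) ∈ B := by rw [hB, one_pow]
  have Binv : ∀ x ∈ B, x⁻¹ ∈ B := by
    intro x hx; rw [hB] at *; rw [inv_pow, hx, inv_one]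
  have Bmul : ∀ x ∈ B, ∀ y ∈ B, x * y ∈ B := by
    intro x hx y hy; rw [hB] at *; rw [mul_pow, hx, hy, one_mul]
  have finv : ∀ x ∈ B, χ (1 - x⁻¹) = χ (1 - x) := by
    intro x hx
    have hx0 := Bne x hx
    have : (1 - x⁻¹) = (-1) * x⁻¹ * (1 - x) := by field_simp; ring
    rw [this, map_mul, map_mul, hneg, hsq _ (Binv x hx)]; simp
  set g : F → F → ℤ := fun a b => χ (1 - a) * χ (1 - b) * χ (1 - a * b) with hg
  have hsum' : ∑ p ∈ B ×ˢ B, g p.1 p.2 = 0 := by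
    rw [Finset.sum_product, ← hsum]
    simp [hg]
  have hg0 : ∀ a b, a = 1 ∨ b = 1 ∨ a * b = 1 → g a b = 0 := by
    intro a b h
    have z : χ 0 = 0 := (h0 0).2 rfl
    simp only [hg]
    rcases h with h | h | h <;> simp [h, z]
  have hgpm : ∀ a b, a ≠ 1 → b ≠ 1 → a * b ≠ 1 → g a b = 1 ∨ g a b = -1 := by
    intro a b h1 h2 h3
    rcases hpm (1 - a) (sub_ne_zero.2 h1.symm) with e1 | e1 <;>
    rcases hpm (1 - b) (sub_ne_zero.2 h2.symm) with e2 | e2 <;>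
    rcases hpm (1 - a * b) (sub_ne_zero.2 h3.symm) with e3 | e3 <;> simp [hg, e1, e2, e3]
  set U := (B ×ˢ B).filter (fun p => p.1 ≠ 1 ∧ p.2 ≠ 1 ∧ p.1 * p.2 ≠ 1) with hU
  set N := (B ×ˢ B).filter (fun p => g p.1 p.2 = -1) with hN
  have memN : ∀ a b, (a, b) ∈ N ↔ a ∈ B ∧ b ∈ B ∧ a ≠ 1 ∧ b ≠ 1 ∧ a * b ≠ 1 ∧ g a b = -1 := by
    intro a b
    simp only [hN, Finset.mem_filter, Finset.mem_product]
    constructor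
    · rintro ⟨⟨h1, h2⟩, h3⟩
      refine ⟨h1, h2, ?_, ?_, ?_, h3⟩ <;> intro h <;>
        (have := hg0 a b (by tauto); omega)
    · tauto
  have cU : U.card = (k-1)*(k-2) := by
    rw [hU, Finset.card_filter, Finset.sum_product]
    rw [← Finset.sum_erase_add _ _ B1]
    have : ∀ a ∈ B.erase 1, (∑ b ∈ B, if (a, b).1 ≠ 1 ∧ (a, b).2 ≠ 1 ∧ (a, b).1 * (a, b).2 ≠ 1 then 1 else 0) = k - 2 := by
      intro a ha
      rw [Finset.mem_erase] at ha
      have ha0 := Bne a ha.2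
      rw [← Finset.card_filter]
      have : B.filter (fun b => (a, b).1 ≠ 1 ∧ (a, b).2 ≠ 1 ∧ (a, b).1 * (a, b).2 ≠ 1) = (B.erase 1).erase a⁻¹ := by
        ext b
        simp only [Finset.mem_filter, Finset.mem_erase]
        have : a * b = 1 ↔ b = a⁻¹ := by rw [mul_comm]; exact mul_eq_one_iff_eq_inv₀ ha0
        simp only [ne_eq, this]; tauto
      rw [this, Finset.card_erase_of_mem, Finset.card_erase_of_mem B1, hcard]; rfl
      simp [Binv a ha.2, ha.1]
    rw [Finset.sum_congr rfl this]
    simp [Finset.card_erase_of_mem B1, hcard]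
  have cN : 2 * N.card = (k-1)*(k-2) := by
    rw [← cU]
    have e : ∑ p ∈ B ×ˢ B, (g p.1 p.2 + 2 * (if g p.1 p.2 = -1 then 1 else 0)) = ∑ p ∈ B ×ˢ B, (if p.1 ≠ 1 ∧ p.2 ≠ 1 ∧ p.1 * p.2 ≠ 1 then (1:ℤ) else 0) := by
      apply Finset.sum_congr rfl
      rintro ⟨a, b⟩ -
      by_cases h : a ≠ 1 ∧ b ≠ 1 ∧ a * b ≠ 1
      · rw [if_pos h]
        rcases hgpm a b h.1 h.2.1 h.2.2 with e | e <;> simp [e]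
      · rw [if_neg h]
        have := hg0 a b (by tauto)
        simp [this]
    rw [Finset.sum_add_distrib, hsum', ← Finset.mul_sum, Finset.sum_boole, Finset.sum_boole, zero_add] at e
    exact_mod_cast e
  have inv_ne : ∀ a : F, a ≠ 1 → a⁻¹ ≠ 1 := fun a h h' => h (by simpa using h')
  -- symmetries
  have Nswap : ∀ a b, (a, b) ∈ N → (b, a) ∈ N := by
    intro a b h
    rw [memN] at *
    obtain ⟨h1, h2, h3, h4, h5, h6⟩ := h
    refine ⟨h2, h1, h4, h3, by rwa [mul_comm], ?_⟩
    rw [← h6]; simp only [hg, mul_comm b a]; ring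
  have Ninv : ∀ a b, (a, b) ∈ N → (a⁻¹, b⁻¹) ∈ N := by
    intro a b h
    rw [memN] at *
    obtain ⟨h1, h2, h3, h4, h5, h6⟩ := h
    refine ⟨Binv _ h1, Binv _ h2, inv_ne _ h3, inv_ne _ h4, ?_, ?_⟩
    · rw [← mul_inv]; exact inv_ne _ h5
    · rw [← h6]; simp only [hg, ← mul_inv]
      rw [finv a h1, finv b h2, finv _ (Bmul a h1 b h2)]
  have Nrot : ∀ a b, (a, b) ∈ N → (b, (a * b)⁻¹) ∈ N := by
    intro a b h
    rw [memN] at *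
    obtain ⟨h1, h2, h3, h4, h5, h6⟩ := h
    have hb0 := Bne b h2
    have e : b * (a * b)⁻¹ = a⁻¹ := by
      have ha0 := Bne a h1
      field_simp
    refine ⟨h2, Binv _ (Bmul a h1 b h2), h4, inv_ne _ h5, ?_, ?_⟩
    · rw [e]; exact inv_ne _ h3
    · rw [← h6]; simp only [hg, e]
      rw [finv a h1, finv _ (Bmul a h1 b h2)]; ring
  have sq1 : ∀ a : F, a ≠ 1 → a⁻¹ = a → a ≠ 0 → a = -1 := by
    intro a h1 h2 h0
    have : a * a = 1 := by nth_rewrite 1 [← h2]; exact inv_mul_cancel₀ h0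
    rcases mul_self_eq_one_iff.1 this with h | h
    · exact absurd h h1
    · exact h
  -- off diagonal
  have hoff : 4 ∣ (N.filter (fun p => p.1 ≠ p.2)).card := by
    apply klein4 _ (fun p => (p.2, p.1)) (fun p => (p.1⁻¹, p.2⁻¹))
    · rintro ⟨a, b⟩ h
      simp only [Finset.mem_filter] at *
      exact ⟨Nswap _ _ h.1, h.2.symm⟩
    · rintro ⟨a, b⟩ h
      simp only [Finset.mem_filter] at *
      exact ⟨Ninv _ _ h.1, fun h' => h.2 (inv_injective h')⟩
    · simp
    · simp
    · simp
    · rintro ⟨a, b⟩ h h'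
      simp only [Finset.mem_filter, Prod.mk.injEq] at *
      exact h.2 h'.2
    · rintro ⟨a, b⟩ h h'
      simp only [Finset.mem_filter, Prod.mk.injEq, memN] at *
      apply h.2
      rw [sq1 a (by tauto) h'.1 (Bne _ (by tauto)), sq1 b (by tauto) h'.2 (Bne _ (by tauto))]
    · rintro ⟨a, b⟩ h h'
      simp only [Finset.mem_filter, Prod.mk.injEq, memN] at *
      have := h.1.2.2.2.2.1
      apply this
      rw [← h'.1]
      exact inv_mul_cancel₀ (Bne _ (by tauto))
  have gdiag : ∀ a, a ≠ 1 → g a a = χ (1 - a * a) := by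
    intro a h
    simp only [hg]
    rcases hpm (1 - a) (sub_ne_zero.2 h.symm) with e | e <;> simp [e]
  have diagfix : ∀ a b, a = b → (a, b) ∈ N → (a⁻¹, b⁻¹) ≠ (a, b) := by
    rintro a b rfl h h'
    rw [memN] at h
    apply h.2.2.2.2.1
    simp only [Prod.mk.injEq] at h'
    nth_rewrite 1 [← h'.1]
    exact inv_mul_cancel₀ (Bne _ h.1)
  have hdiag : 2 ∣ (N.filter (fun p => ¬ (p.1 ≠ p.2))).card := by
    apply inv2 _ (fun p => (p.1⁻¹, p.2⁻¹))
    · rintro ⟨a, b⟩ h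
      simp only [Finset.mem_filter, not_not] at *
      exact ⟨Ninv _ _ h.1, by rw [h.2]⟩
    · simp
    · rintro ⟨a, b⟩ h
      simp only [Finset.mem_filter, not_not] at *
      exact diagfix a b h.2 h.1
  have hdiag4 : k % 4 = 2 → 4 ∣ (N.filter (fun p => ¬ (p.1 ≠ p.2))).card := by
    intro hk
    have hm1 : (-1 : F) ∈ B := by
      rw [hB]; exact Even.neg_one_pow (by rw [Nat.even_iff]; omega)
    apply klein4 _ (fun p => (-p.1, -p.2)) (fun p => (p.1⁻¹, p.2⁻¹))
    · rintro ⟨a, b⟩ h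
      simp only [Finset.mem_filter, not_not] at *
      obtain ⟨h1, rfl⟩ := h
      refine ⟨?_, rfl⟩
      rw [memN] at *
      have hn : -a ∈ B := by have := Bmul _ hm1 a h1.1; simpa using this
      have hn1 : -a ≠ 1 := by
        intro h
        apply h1.2.2.2.2.1
        rw [← neg_mul_neg, h, one_mul]
      refine ⟨hn, hn, hn1, hn1, by rw [neg_mul_neg]; tauto, ?_⟩
      rw [gdiag _ hn1, neg_mul_neg, ← gdiag a (by tauto)]; tauto
    · rintro ⟨a, b⟩ h
      simp only [Finset.mem_filter, not_not] at *
      exact ⟨Ninv _ _ h.1, by rw [h.2]⟩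
    · simp
    · simp
    · rintro ⟨a, b⟩ h
      simp [inv_neg]
    · rintro ⟨a, b⟩ h h'
      simp only [Finset.mem_filter, not_not, memN, Prod.mk.injEq] at *
      have ha0 := Bne a h.1.1
      apply hchar
      have := h'.1
      apply mul_right_cancel₀ ha0
      rw [neg_one_mul, this, one_mul]
    · rintro ⟨a, b⟩ h
      simp only [Finset.mem_filter, not_not] at *
      exact diagfix a b h.2 h.1
    · rintro ⟨a, b⟩ h h'
      simp only [Finset.mem_filter, not_not, memN, Prod.mk.injEq] at *
      obtain ⟨h1, rfl⟩ := h
      have ha0 := Bne a h1.1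
      have e : a * a = -1 := by
        nth_rewrite 1 [← h'.1]
        rw [neg_mul, inv_mul_cancel₀ ha0]
      have hk' : a ^ k = 1 := (hB a).1 h1.1
      obtain ⟨t, ht⟩ : ∃ t, k = 2 * t ∧ Odd t := ⟨k / 2, by omega, by rw [Nat.odd_iff]; omega⟩
      rw [ht.1, pow_mul, pow_two, e, ht.2.neg_one_pow] at hk'
      exact hchar hk'
  -- order three
  have hrot : 3 ∣ (N.filter (fun p => ¬ (p.1 = p.2 ∧ p.1 ^ 3 = 1))).card := by
    apply rot3 _ (fun p => (p.2, (p.1 * p.2)⁻¹))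
    · rintro ⟨a, b⟩ h
      simp only [Finset.mem_filter] at *
      refine ⟨Nrot _ _ h.1, ?_⟩
      rintro ⟨e1, e2⟩
      apply h.2
      rw [memN] at h
      have ha0 := Bne a h.1.1
      have hb0 := Bne b h.1.2.1
      have e3 : a * b * b = 1 := by
        nth_rewrite 2 [e1]; exact mul_inv_cancel₀ (mul_ne_zero ha0 hb0)
      have : a = b := by
        apply mul_right_cancel₀ (mul_ne_zero hb0 hb0)
        rw [← mul_assoc, e3, ← e2]; ring
      exact ⟨this, by rw [this, e2]⟩
    · rintro ⟨a, b⟩ h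
      simp only [Finset.mem_filter, memN] at *
      have ha0 := Bne a h.1.1
      have hb0 := Bne b h.1.2.1
      simp only [Prod.mk.injEq]
      constructor <;> field_simp
    · rintro ⟨a, b⟩ h h'
      simp only [Finset.mem_filter, memN, Prod.mk.injEq] at *
      have ha0 := Bne a h.1.1
      have hb0 := Bne b h.1.2.1
      apply h.2
      refine ⟨h'.1.symm, ?_⟩
      have := h'.2
      rw [h'.1] at this
      have e3 : a * a * a = 1 := by
        nth_rewrite 3 [← this]; exact mul_inv_cancel₀ (mul_ne_zero ha0 ha0)
      rw [← e3]; ring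
  have hfix2 : 2 ∣ (N.filter (fun p => (p.1 = p.2 ∧ p.1 ^ 3 = 1))).card := by
    apply inv2 _ (fun p => (p.1⁻¹, p.2⁻¹))
    · rintro ⟨a, b⟩ h
      simp only [Finset.mem_filter] at *
      exact ⟨Ninv _ _ h.1, by rw [h.2.1], by rw [inv_pow, h.2.2, inv_one]⟩
    · simp
    · rintro ⟨a, b⟩ h
      simp only [Finset.mem_filter] at *
      exact diagfix a b h.2.1 h.1
  have hfixle : (N.filter (fun p => (p.1 = p.2 ∧ p.1 ^ 3 = 1))).card ≤ 2 := by
    have : (N.filter (fun p => (p.1 = p.2 ∧ p.1 ^ 3 = 1))).card ≤ ((Polynomial.nthRootsFinset 3 (1:F)).erase 1).card := by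
      apply Finset.card_le_card_of_injOn (fun p => p.1)
      · rintro ⟨a, b⟩ h
        simp only [Finset.coe_filter, Set.mem_ofPred_eq, memN] at h
        obtain ⟨h1, rfl, h3⟩ := h
        simp [h1, h3]
      · rintro ⟨a, b⟩ h ⟨c, d⟩ h' e
        simp only [Finset.coe_filter, Set.mem_ofPred_eq] at *
        rw [Prod.mk.injEq]; exact ⟨e, by rw [← h.2.1, ← h'.2.1, e]⟩
    refine this.trans ?_
    rw [Finset.card_erase_of_mem (by simp [Polynomial.mem_nthRootsFinset])]
    have : (Polynomial.nthRootsFinset 3 (1:F)).card ≤ 3 := by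
      rw [Polynomial.nthRootsFinset_def]
      exact (Multiset.toFinset_card_le _).trans (Polynomial.card_nthRoots 3 1)
    omega
  have s1 := Finset.card_filter_add_card_filter_not (s := N) (fun p => p.1 ≠ p.2)
  have s2 := Finset.card_filter_add_card_filter_not (s := N) (fun p => p.1 = p.2 ∧ p.1 ^ 3 = 1)
  exact mod_arith k hk3 N.card _ _ _ _ cN s1.symm hoff hdiag hdiag4 (by rw [← s2, add_comm]) hrot (by intro; omega)

abbrev dt {F : Type} [Field F] (u v : Fin 2 → F) : F := u 0 * v 1 - u 1 * v 0

def WW {F : Type} [Field F] [Fintype F] [DecidableEq F]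
    (P Q R : Projectivization F (Fin 2 → F)) : ℤ :=
  quadraticChar F (dt P.rep Q.rep * dt Q.rep R.rep * dt R.rep P.rep)

theorem WW_mk {F : Type} [Field F] [Fintype F] [DecidableEq F] (u v w : Fin 2 → F)
    (hu : u ≠ 0) (hv : v ≠ 0) (hw : w ≠ 0) :
    WW (Projectivization.mk F u hu) (Projectivization.mk F v hv) (Projectivization.mk F w hw) =
      quadraticChar F (dt u v * dt v w * dt w u) := by
  obtain ⟨a, ha⟩ := Projectivization.exists_smul_eq_mk_rep F u hu
  obtain ⟨b, hb⟩ := Projectivization.exists_smul_eq_mk_rep F v hv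
  obtain ⟨c, hc⟩ := Projectivization.exists_smul_eq_mk_rep F w hw
  unfold WW
  rw [← ha, ← hb, ← hc]
  have : dt (a • u) (b • v) * dt (b • v) (c • w) * dt (c • w) (a • u) =
    ((a : F) * b * c) ^ 2 * (dt u v * dt v w * dt w u) := by
    simp only [dt, Pi.smul_apply, Units.smul_def, smul_eq_mul]; ring
  rw [this, map_mul, quadraticChar_sq_one', one_mul]
  simp

theorem WW_map {F : Type} [Field F] [Fintype F] [DecidableEq F]
    (f : (Fin 2 → F) →ₗ[F] (Fin 2 → F)) (hf : Function.Injective f) (d : F)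
    (hd : ∀ u v, dt (f u) (f v) = d * dt u v) (P Q R : Projectivization F (Fin 2 → F)) :
    WW (Projectivization.map f hf P) (Projectivization.map f hf Q) (Projectivization.map f hf R)
      = quadraticChar F d ^ 3 * WW P Q R := by
  induction P using Projectivization.ind with | h u hu =>
  induction Q using Projectivization.ind with | h v hv =>
  induction R using Projectivization.ind with | h w hw =>
  simp only [Projectivization.map_mk]
  rw [WW_mk, WW_mk, hd, hd, hd]
  simp only [map_mul]
  ring

theorem WW_eq_zero {F : Type} [Field F] [Fintype F] [DecidableEq F]
    (P Q R : Projectivization F (Fin 2 → F)) (h : P = Q ∨ Q = R ∨ R = P) : WW P Q R = 0 := by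
  unfold WW
  rw [quadraticChar_eq_zero_iff]
  rcases h with rfl | rfl | rfl <;> simp only [dt] <;> ring

theorem WW_sum {F : Type} [Field F] [Fintype F] [DecidableEq F]
    [Fintype (Projectivization F (Fin 2 → F))] (hF : ringChar F ≠ 2) :
    ∑ P : Projectivization F (Fin 2 → F), ∑ Q, ∑ R, WW P Q R = 0 := by
  obtain ⟨n, hn⟩ := quadraticChar_exists_neg_one (F := F) hF
  have hn0 : n ≠ 0 := by rintro rfl; simp at hn
  let f : (Fin 2 → F) →ₗ[F] (Fin 2 → F) :=
    { toFun := fun u => ![n * u 0, u 1]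
      map_add' := by intro x y; ext i; fin_cases i <;> simp [mul_add]
      map_smul' := by intro c x; ext i; fin_cases i <;> simp [mul_left_comm] }
  have hf : Function.Injective f := by
    intro u v h
    have h0 := congrFun h 0
    have h1 := congrFun h 1
    simp [f, hn0] at h0 h1
    ext i; fin_cases i <;> simp [h0, h1]
  have hd : ∀ u v, dt (f u) (f v) = n * dt u v := by
    intro u v; simp [f, dt]; ring
  have hbij : Function.Bijective (Projectivization.map f hf) :=
    (Projectivization.map_injective f hf).bijective_of_finite
  have key : ∑ P : Projectivization F (Fin 2 → F), ∑ Q, ∑ R, WW P Q R =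
      ∑ P : Projectivization F (Fin 2 → F), ∑ Q, ∑ R, - WW P Q R := by
    conv_lhs => rw [← hbij.sum_comp]
    refine Finset.sum_congr rfl fun P _ => ?_
    conv_lhs => rw [← hbij.sum_comp]
    refine Finset.sum_congr rfl fun Q _ => ?_
    conv_lhs => rw [← hbij.sum_comp]
    refine Finset.sum_congr rfl fun R _ => ?_
    rw [WW_map f hf n hd, hn]; ring
  simp only [Finset.sum_neg_distrib] at key
  omega

theorem WW_SL {F : Type} [Field F] [Fintype F] [DecidableEq F]
    (g : Matrix.SpecialLinearGroup (Fin 2) F) (P Q R : Projectivization F (Fin 2 → F)) :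
    WW (mapSL g P) (mapSL g Q) (mapSL g R) = WW P Q R := by
  unfold mapSL
  rw [WW_map _ _ 1]
  · simp
  · intro u v
    have := g.det_coe
    rw [Matrix.det_fin_two] at this
    simp [Matrix.SpecialLinearGroup.toLin'_apply, Matrix.mulVec, dotProduct, Fin.sum_univ_two, dt]
    linear_combination (u 0 * v 1 - u 1 * v 0) * this

theorem mapSL_inj {F : Type} [Field F] (g : Matrix.SpecialLinearGroup (Fin 2) F) :
    Function.Injective (mapSL g) := Projectivization.map_injective _ _

theorem embedPt_inj (F : Type) [Field F] : Function.Injective (embedPt F) := by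
  intro x y h
  unfold embedPt at h
  rw [Projectivization.mk_eq_mk_iff'] at h
  obtain ⟨a, ha⟩ := h
  have h0 := congrFun ha 0
  have h1 := congrFun ha 1
  simp at h0 h1
  rw [← h0, h1, one_mul]

open Classical in
theorem block_sum (F : Type) [Field F] [Fintype F] [DecidableEq F] (k : ℕ) (hF : ringChar F ≠ 2)
    (hdes : gives3Design F k) (B : Finset F) (hB : ∀ x, x ∈ B ↔ x ^ k = 1) :
    ∑ x ∈ B, ∑ y ∈ B, ∑ z ∈ B, quadraticChar F ((x - y) * (y - z) * (z - x)) = 0 := by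
  obtain ⟨lam, -, hl⟩ := hdes
  haveI : Finite (Projectivization F (Fin 2 → F)) := inferInstance
  letI : Fintype (Projectivization F (Fin 2 → F)) := Fintype.ofFinite _
  set BB : Finset (Projectivization F (Fin 2 → F)) := B.image (embedPt F) with hBB
  have hBBc : (BB : Set _) = starterB F k := by
    rw [hBB, Finset.coe_image]; unfold starterB; congr 1; ext x; simp [hB]
  have hBsum : ∑ P ∈ BB, ∑ Q ∈ BB, ∑ R ∈ BB, WW P Q R =
      ∑ x ∈ B, ∑ y ∈ B, ∑ z ∈ B, quadraticChar F ((x - y) * (y - z) * (z - x)) := by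
    rw [hBB, Finset.sum_image (fun _ _ _ _ h => embedPt_inj F h)]
    refine Finset.sum_congr rfl fun x _ => ?_
    rw [Finset.sum_image (fun _ _ _ _ h => embedPt_inj F h)]
    refine Finset.sum_congr rfl fun y _ => ?_
    rw [Finset.sum_image (fun _ _ _ _ h => embedPt_inj F h)]
    refine Finset.sum_congr rfl fun z _ => ?_
    unfold embedPt
    rw [WW_mk]
    simp [dt]
  rw [← hBsum]
  set D : Finset (Set (Projectivization F (Fin 2 → F))) := Finset.univ.filter (· ∈ designBlocks F k) with hD
  have c : ∀ S ∈ D, ∑ P, ∑ Q, ∑ R, (if P ∈ S ∧ Q ∈ S ∧ R ∈ S then WW P Q R else 0) =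
      ∑ P ∈ BB, ∑ Q ∈ BB, ∑ R ∈ BB, WW P Q R := by
    intro S hS
    simp only [hD, Finset.mem_filter, Finset.mem_univ, true_and] at hS
    obtain ⟨g, rfl⟩ := hS
    have hbij : Function.Bijective (mapSL g) := (mapSL_inj g).bijective_of_finite
    have hm : ∀ P, mapSL g P ∈ mapSL g '' starterB F k ↔ P ∈ BB := by
      intro P; rw [(mapSL_inj g).mem_set_image, ← hBBc]; simp
    have e : ∀ f : Projectivization F (Fin 2 → F) → ℤ, ∑ P ∈ BB, f P = ∑ P, if P ∈ BB then f P else 0 := by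
      intro f; simp
    rw [e, ← hbij.sum_comp]
    refine Finset.sum_congr rfl fun P _ => ?_
    rw [hm, ← hbij.sum_comp]
    by_cases hP : P ∈ BB
    swap
    · simp [hP]
    rw [if_pos hP, e]
    refine Finset.sum_congr rfl fun Q _ => ?_
    rw [hm, ← hbij.sum_comp]
    by_cases hQ : Q ∈ BB
    swap
    · simp [hQ]
    rw [if_pos hQ, e]
    refine Finset.sum_congr rfl fun R _ => ?_
    rw [hm, WW_SL]
    simp [hP, hQ]
  have tot : ∑ S ∈ D, ∑ P, ∑ Q, ∑ R, (if P ∈ S ∧ Q ∈ S ∧ R ∈ S then WW P Q R else 0) = 0 := by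
    rw [Finset.sum_comm]
    have : ∀ P Q R : Projectivization F (Fin 2 → F), ∑ S ∈ D, (if P ∈ S ∧ Q ∈ S ∧ R ∈ S then WW P Q R else 0) = lam * WW P Q R := by
      intro P Q R
      by_cases h : P = Q ∨ Q = R ∨ R = P
      · simp [WW_eq_zero P Q R h]
      · push Not at h
        have h3 := hl {P, Q, R} (Finset.card_eq_three.2 ⟨P, Q, R, h.1, h.2.2.symm, h.2.1, rfl⟩)
        rw [← Finset.sum_filter, Finset.sum_const, nsmul_eq_mul]
        congr 2
        rw [← h3, ← Set.ncard_coe_finset]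
        congr 1
        ext S
        simp [hD, Set.insert_subset_iff]
    calc _ = ∑ P : Projectivization F (Fin 2 → F), ∑ Q, ∑ R, (lam : ℤ) * WW P Q R := by
          refine Finset.sum_congr rfl fun P _ => ?_
          rw [Finset.sum_comm]
          refine Finset.sum_congr rfl fun Q _ => ?_
          rw [Finset.sum_comm]
          exact Finset.sum_congr rfl fun R _ => this P Q R
      _ = 0 := by simp only [← Finset.mul_sum]; rw [WW_sum hF, mul_zero]
  rw [Finset.sum_congr rfl c, Finset.sum_const, nsmul_eq_mul] at tot
  rcases mul_eq_zero.1 tot with h | h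
  · exfalso
    rw [Nat.cast_eq_zero, Finset.card_eq_zero] at h
    have : mapSL 1 '' starterB F k ∈ D := by
      simp only [hD, Finset.mem_filter, Finset.mem_univ, true_and]
      exact ⟨1, rfl⟩
    rw [h] at this
    simp at this
  · exact h

/-- Theorem 3.1: if `e = (q-1)/k` is even and `(q,k)` gives a 3-design, then
`k ≡ 1, 2, 5, 10, 13, 17 (mod 24)`. -/
theorem stmt_7 (F : Type) [Field F] [Fintype F] [DecidableEq F]
    (q k : ℕ) (hq : Fintype.card F = q) (hqodd : Odd q) (hq4 : q % 4 = 1)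
    (hkdvd : k ∣ q - 1) (hk3 : 3 < k) (hkq : k < q - 1)
    (he : Even ((q - 1) / k))
    (hdes : gives3Design F k) :
    k % 24 = 1 ∨ k % 24 = 2 ∨ k % 24 = 5 ∨ k % 24 = 10 ∨ k % 24 = 13 ∨ k % 24 = 17 := by
  subst hq
  have hF : ringChar F ≠ 2 := by
    intro h
    have := FiniteField.even_card_of_char_two h
    rw [Nat.odd_iff] at hqodd
    omega
  have hqc := hkdvd
  set B : Finset F := Finset.univ.filter (fun x => x ^ k = 1) with hBd
  have hB : ∀ x, x ∈ B ↔ x ^ k = 1 := by simp [hBd]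
  have hk0 : k ≠ 0 := by omega
  have Bne : ∀ x ∈ B, x ≠ 0 := by
    rintro x hx rfl
    rw [hB, zero_pow hk0] at hx
    exact zero_ne_one hx
  obtain ⟨e, hke⟩ := hkdvd
  have hcard : B.card = k := by
    obtain ⟨u, hu⟩ := IsCyclic.exists_generator (α := Fˣ)
    have ho : orderOf u = Fintype.card F - 1 := by
      rw [orderOf_eq_card_of_forall_mem_zpowers hu, Nat.card_eq_fintype_card, Fintype.card_units]
    have hp : IsPrimitiveRoot (u : F) (Fintype.card F - 1) := by
      rw [← ho, IsPrimitiveRoot.coe_units_iff]; exact IsPrimitiveRoot.orderOf u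
    have hp' := hp.pow (by omega) (hke.trans (mul_comm _ _))
    rw [← hp'.card_nthRootsFinset]
    congr 1
    ext x
    rw [hB, Polynomial.mem_nthRootsFinset (by omega)]
  have hsq : ∀ x ∈ B, quadraticChar F x = 1 := by
    intro x hx
    rw [quadraticChar_one_iff_isSquare (Bne x hx), FiniteField.isSquare_iff hF (Bne x hx)]
    rw [hke, Nat.mul_div_cancel_left _ (by omega)] at he
    obtain ⟨t, rfl⟩ := he
    have : Fintype.card F / 2 = k * t := by
      have : Fintype.card F - 1 = 2 * (k * t) := by rw [hke]; ring
      omega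
    rw [this, pow_mul, (hB x).1 hx, one_pow]
  have hneg : quadraticChar F (-1) = 1 := by
    rw [quadraticChar_one_iff_isSquare (by simp), FiniteField.isSquare_neg_one_iff]; omega
  have hbs := block_sum F k hF hdes B hB
  refine comb F k hk3 B hB hcard (quadraticChar F : F →* ℤ) (fun x => quadraticChar_eq_zero_iff)
    (fun x hx => quadraticChar_dichotomy hx) hneg (Ring.neg_one_ne_one_of_char_ne_two hF) hsq ?_
  have perm : ∀ x ∈ B, ∀ f : F → ℤ, ∑ y ∈ B, f y = ∑ y ∈ B, f (x * y) := by
    intro x hx f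
    symm
    have hx0 := Bne x hx
    apply Finset.sum_bij' (fun y _ => x * y) (fun y _ => x⁻¹ * y)
    · intro y hy; rw [hB] at *; rw [mul_pow, hx, hy, one_mul]
    · intro y hy; rw [hB] at *; rw [mul_pow, inv_pow, hx, hy, inv_one, one_mul]
    · intro y hy; field_simp
    · intro y hy; field_simp
    · intro y hy; rfl
  have e1 : ∀ x ∈ B, ∑ y ∈ B, ∑ z ∈ B, quadraticChar F ((x - y) * (y - z) * (z - x)) =
      ∑ a ∈ B, ∑ b ∈ B, quadraticChar F ((1 - a) * (1 - b) * (1 - a * b)) := by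
    intro x hx
    rw [perm x hx]
    refine Finset.sum_congr rfl fun a ha => ?_
    rw [perm x hx, perm a ha]
    refine Finset.sum_congr rfl fun b hb => ?_
    have : (x - x * a) * (x * a - x * (a * b)) * (x * (a * b) - x) =
      (-1) * x * x * x * a * ((1 - a) * (1 - b) * (1 - a * b)) := by ring
    rw [this]
    simp only [map_mul (quadraticChar F), hneg, hsq x hx, hsq a ha, one_mul]
  rw [Finset.sum_congr rfl e1, Finset.sum_const, hcard, nsmul_eq_mul] at hbs
  rcases mul_eq_zero.1 hbs with h | h
  · exact absurd (Nat.cast_eq_zero.1 h) hk0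
  · exact h
end
end

section
/- Let q be an odd prime power with q ≡ 1 (mod 4), let k be a divisor of q−1 with 3 < k < q−1, and suppose e = (q−1)/k is even. If (q,k) gives a 3-design, then k is not divisible by 3. -/
/-!
Setting: `F` is a finite field of order `q`. The projective line `PG(1,q)` is
modelled as `Projectivization F (Fin 2 → F)`. Since scalar matrices act trivially
on the projective line, the images of a set under all elements of `SL(2,F)` form
exactly its `PSL(2,F)`-orbit; `mapSL g` is the map of the projective line induced
by `g : SL(2,F)`. For `k ∣ q - 1`, the unique subgroup of order `k` of `Fˣ` is the
set of `k`-th roots of unity `{x : F | x ^ k = 1}`, embedded into the projective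
line via `x ↦ [x : 1]`. `(q, k)` gives a 3-design iff there is `lam > 0` such that
every 3-subset of the projective line lies in exactly `lam` blocks of the orbit.
-/

noncomputable section

open Matrix

theorem aux_mod (α : Type) [Fintype α] [DecidableEq α] (r : α → α) (hr : ∀ x, r (r (r x)) = x) :
    Fintype.card α ≡ (Finset.univ.filter fun x => r x = x).card [MOD 3] := by
  have : Fact (Nat.Prime 3) := ⟨Nat.prime_three⟩
  have := Equiv.Perm.card_fixedPoints_modEq (f := (r : Function.End α)) (p := 3) (n := 1) (by
    funext x
    exact hr x)
  refine this.trans ?_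
  rw [← Fintype.card_subtype]
  exact congrArg (· % 3) (Fintype.card_congr (Equiv.refl _))

/-- bracket -/
def auxD {F : Type} [Field F] (u v : Fin 2 → F) : F := u 0 * v 1 - u 1 * v 0

/-- sign of triple -/
def auxS {F : Type} [Field F] [Fintype F] [DecidableEq F]
    (p q r : Projectivization F (Fin 2 → F)) : ℤ :=
  quadraticChar F (auxD p.rep q.rep * auxD q.rep r.rep * auxD r.rep p.rep)

theorem auxS_mk {F : Type} [Field F] [Fintype F] [DecidableEq F]
    (u v w : Fin 2 → F) (hu : u ≠ 0) (hv : v ≠ 0) (hw : w ≠ 0) :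
    auxS (Projectivization.mk F u hu) (Projectivization.mk F v hv) (Projectivization.mk F w hw)
      = quadraticChar F (auxD u v * auxD v w * auxD w u) := by
  obtain ⟨a, ha⟩ := Projectivization.exists_smul_eq_mk_rep F u hu
  obtain ⟨b, hb⟩ := Projectivization.exists_smul_eq_mk_rep F v hv
  obtain ⟨c, hc⟩ := Projectivization.exists_smul_eq_mk_rep F w hw
  unfold auxS
  rw [← ha, ← hb, ← hc]
  have : auxD (a • u) (b • v) * auxD (b • v) (c • w) * auxD (c • w) (a • u)
      = ((a * b * c : Fˣ) : F) ^ 2 * (auxD u v * auxD v w * auxD w u) := by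
    simp only [auxD, Pi.smul_apply, Units.smul_def, smul_eq_mul, Units.val_mul]
    ring
  rw [this, map_mul, quadraticChar_sq_one' (Units.ne_zero _), one_mul]

theorem auxS_map {F : Type} [Field F] [Fintype F] [DecidableEq F]
    (L : (Fin 2 → F) →ₗ[F] (Fin 2 → F)) (hL : Function.Injective L) (d : F)
    (hd : ∀ u v, auxD (L u) (L v) = d * auxD u v) (p q r : Projectivization F (Fin 2 → F)) :
    auxS (Projectivization.map L hL p) (Projectivization.map L hL q) (Projectivization.map L hL r)
      = quadraticChar F (d ^ 3) * auxS p q r := by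
  induction p using Projectivization.ind with | h u hu =>
  induction q using Projectivization.ind with | h v hv =>
  induction r using Projectivization.ind with | h w hw =>
  rw [Projectivization.map_mk, Projectivization.map_mk, Projectivization.map_mk,
    auxS_mk, auxS_mk, ← map_mul, hd, hd, hd]
  congr 1
  ring

theorem auxS_mapSL {F : Type} [Field F] [Fintype F] [DecidableEq F]
    (g : Matrix.SpecialLinearGroup (Fin 2) F) (p q r : Projectivization F (Fin 2 → F)) :
    auxS (mapSL g p) (mapSL g q) (mapSL g r) = auxS p q r := by
  unfold mapSL
  rw [auxS_map _ _ 1]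
  · simp
  · intro u v
    have h := g.2
    rw [Matrix.det_fin_two] at h
    simp only [auxD, LinearEquiv.coe_coe, Matrix.SpecialLinearGroup.toLin'_apply,
      Matrix.toLin'_apply, Matrix.mulVec, dotProduct, Fin.sum_univ_two]
    linear_combination (u 0 * v 1 - u 1 * v 0) * h

theorem auxS_ne {F : Type} [Field F] [Fintype F] [DecidableEq F]
    (p q r : Projectivization F (Fin 2 → F)) (h : auxS p q r ≠ 0) : p ≠ q ∧ p ≠ r ∧ q ≠ r := by
  refine ⟨?_, ?_, ?_⟩ <;> rintro rfl <;> apply h <;> simp [auxS, auxD, mul_comm]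

theorem aux_inj {F : Type} [Field F] : Function.Injective (embedPt F) := by
  intro a b h
  unfold embedPt at h
  rw [Projectivization.mk_eq_mk_iff'] at h
  obtain ⟨c, hc⟩ := h
  have h0 := congrFun hc 0
  have h1 := congrFun hc 1
  simp at h0 h1
  rw [h1] at h0
  simpa using h0.symm

theorem auxS_embed {F : Type} [Field F] [Fintype F] [DecidableEq F] (a b c : F) :
    auxS (embedPt F a) (embedPt F b) (embedPt F c)
      = quadraticChar F ((a - b) * (b - c) * (c - a)) := by
  unfold embedPt
  rw [auxS_mk]
  simp [auxD]

theorem aux_total {F : Type} [Field F] [Fintype F] [DecidableEq F]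
    [Fintype (Projectivization F (Fin 2 → F))] (h2 : ringChar F ≠ 2) :
    ∑ p : Projectivization F (Fin 2 → F), ∑ q, ∑ r, auxS p q r = 0 := by
  obtain ⟨n, hn⟩ := quadraticChar_exists_neg_one (F := F) h2
  have hn0 : n ≠ 0 := by
    rintro rfl
    simp at hn
  set L : (Fin 2 → F) →ₗ[F] (Fin 2 → F) := Matrix.toLin' !![n, 0; 0, 1] with hLdef
  have hL0 : ∀ u, L u = ![n * u 0, u 1] := by
    intro u
    rw [hLdef, Matrix.toLin'_apply]
    ext i
    fin_cases i <;> simp [Matrix.mulVec, dotProduct, Fin.sum_univ_two]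
  have hL : Function.Injective L := by
    intro u v h
    rw [hL0, hL0] at h
    have h0 := congrFun h 0
    have h1 := congrFun h 1
    simp [hn0] at h0 h1
    ext i
    fin_cases i
    · exact h0
    · exact h1
  have hbij : Function.Bijective (Projectivization.map L hL) :=
    Finite.injective_iff_bijective.1 (Projectivization.map_injective L hL)
  have key : ∀ p q r, auxS (Projectivization.map L hL p) (Projectivization.map L hL q)
      (Projectivization.map L hL r) = - auxS p q r := by
    intro p q r
    rw [auxS_map L hL n]
    · rw [map_pow, hn]; ring
    · intro u v
      rw [hL0, hL0]
      simp [auxD]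
      ring
  have h1 : ∑ p : Projectivization F (Fin 2 → F), ∑ q, ∑ r, auxS p q r
      = ∑ p : Projectivization F (Fin 2 → F), ∑ q, ∑ r, - auxS p q r := by
    rw [← hbij.sum_comp]
    refine Finset.sum_congr rfl fun p _ => ?_
    rw [← hbij.sum_comp]
    refine Finset.sum_congr rfl fun q _ => ?_
    rw [← hbij.sum_comp]
    exact Finset.sum_congr rfl fun r _ => key p q r
  simp only [Finset.sum_neg_distrib] at h1
  linarith

theorem aux_design {F : Type} [Field F] [Fintype F] [DecidableEq F] (k : ℕ)
    (h2 : ringChar F ≠ 2) (hdes : gives3Design F k) :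
    ∑ a : F with a ^ k = 1, ∑ b : F with b ^ k = 1, ∑ c : F with c ^ k = 1,
      quadraticChar F ((a - b) * (b - c) * (c - a)) = 0 := by
  classical
  obtain ⟨lam, hlam, hT⟩ := hdes
  let _ : Fintype (Projectivization F (Fin 2 → F)) := Fintype.ofFinite _
  set N := ∑ a : F with a ^ k = 1, ∑ b : F with b ^ k = 1, ∑ c : F with c ^ k = 1,
      quadraticChar F ((a - b) * (b - c) * (c - a)) with hN
  set 𝔅 : Finset (Set (Projectivization F (Fin 2 → F))) := (designBlocks F k).toFinset with hB
  have hcount : ∀ p q r : Projectivization F (Fin 2 → F), auxS p q r * lam =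
      ∑ S ∈ 𝔅, if p ∈ S ∧ q ∈ S ∧ r ∈ S then auxS p q r else 0 := by
    intro p q r
    by_cases h : auxS p q r = 0
    · simp [h]
    · obtain ⟨h1, h2, h3⟩ := auxS_ne p q r h
      have := hT {p, q, r} (Finset.card_eq_three.2 ⟨p, q, r, h1, h2, h3, rfl⟩)
      rw [← Finset.sum_filter, Finset.sum_const, ← this, nsmul_eq_mul, mul_comm]
      congr 2
      rw [← Set.ncard_coe_finset]
      congr 1
      ext S
      simp [hB, Set.insert_subset_iff]
  have hblock : ∀ S ∈ 𝔅, (∑ p, ∑ q, ∑ r, if p ∈ S ∧ q ∈ S ∧ r ∈ S then auxS p q r else 0) = N := by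
    intro S hS
    rw [hB, Set.mem_toFinset] at hS
    obtain ⟨g, rfl⟩ := hS
    set φ : F → Projectivization F (Fin 2 → F) := fun x => mapSL g (embedPt F x) with hφ
    have hφi : Function.Injective φ :=
      (Projectivization.map_injective _ _).comp aux_inj
    have hmem : ∀ p, p ∈ mapSL g '' starterB F k ↔
        p ∈ (Finset.univ.filter fun a : F => a ^ k = 1).image φ := by
      intro p
      simp [starterB, hφ]
    have : ∀ f : Projectivization F (Fin 2 → F) → ℤ,
        (∑ p, if p ∈ mapSL g '' starterB F k then f p else 0) =
          ∑ a : F with a ^ k = 1, f (φ a) := by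
      intro f
      simp only [hmem]
      rw [Finset.sum_ite_mem, Finset.univ_inter, Finset.sum_image (fun _ _ _ _ h => hφi h)]
    have e : ∀ p q r, (if p ∈ mapSL g '' starterB F k ∧ q ∈ mapSL g '' starterB F k ∧
        r ∈ mapSL g '' starterB F k then auxS p q r else 0) =
        if p ∈ mapSL g '' starterB F k then (if q ∈ mapSL g '' starterB F k then
          (if r ∈ mapSL g '' starterB F k then auxS p q r else 0) else 0) else 0 := by
      intro p q r
      split_ifs <;> tauto
    have z : ∀ (P : Prop) [Decidable P] (f : Projectivization F (Fin 2 → F) → ℤ),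
        (∑ p, if P then f p else 0) = if P then ∑ p, f p else 0 := by
      intro P _ f
      split_ifs <;> simp
    simp only [e, z, this]
    rw [hN]
    simp only [hφ, auxS_mapSL, auxS_embed]
  have h0 : (0 : ℤ) = 𝔅.card * N := by
    calc (0 : ℤ) = (∑ p : Projectivization F (Fin 2 → F), ∑ q, ∑ r, auxS p q r) * lam := by
          rw [aux_total h2, zero_mul]
      _ = ∑ p, ∑ q, ∑ r, ∑ S ∈ 𝔅, if p ∈ S ∧ q ∈ S ∧ r ∈ S then auxS p q r else 0 := by
          simp only [Finset.sum_mul, hcount]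
      _ = ∑ S ∈ 𝔅, ∑ p, ∑ q, ∑ r, if p ∈ S ∧ q ∈ S ∧ r ∈ S then auxS p q r else 0 := by
          simp only [Finset.sum_comm (s := Finset.univ) (t := 𝔅)]
      _ = 𝔅.card * N := by
          rw [Finset.sum_congr rfl hblock, Finset.sum_const, nsmul_eq_mul]
  have hne : 𝔅.card ≠ 0 := by
    rw [Finset.card_ne_zero]
    exact ⟨mapSL 1 '' starterB F k, by rw [hB, Set.mem_toFinset]; exact ⟨1, rfl⟩⟩
  rcases mul_eq_zero.1 h0.symm with h | h
  · exact absurd (by exact_mod_cast h) hne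
  · exact h

theorem aux_norm {F : Type} [Field F] [Fintype F] [DecidableEq F] (k : ℕ) (hk : k ≠ 0)
    (hsq : ∀ b : F, b ^ k = 1 → quadraticChar F b = 1) :
    ∑ a : F with a ^ k = 1, ∑ b : F with b ^ k = 1, ∑ c : F with c ^ k = 1,
      quadraticChar F ((a - b) * (b - c) * (c - a)) =
    (Finset.univ.filter fun a : F => a ^ k = 1).card * ∑ b : F with b ^ k = 1,
      ∑ c : F with c ^ k = 1, quadraticChar F ((1 - b) * (b - c) * (c - 1)) := by
  rw [← nsmul_eq_mul, ← Finset.sum_const]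
  refine Finset.sum_congr rfl fun a ha => ?_
  have ha : a ^ k = 1 := by simpa using ha
  have ha0 : a ≠ 0 := by
    rintro rfl
    simp [hk] at ha
  have this : ∀ f : F → ℤ, ∑ b : F with b ^ k = 1, f b = ∑ b : F with b ^ k = 1, f (a * b) := by
    intro f
    symm
    refine Finset.sum_bij (fun b _ => a * b) ?_ ?_ ?_ ?_
    · intro b hb
      simpa [mul_pow, ha] using hb
    · intro b _ c _ h
      exact mul_left_cancel₀ ha0 h
    · intro b hb
      refine ⟨a⁻¹ * b, ?_, ?_⟩
      · simpa [mul_pow, ha] using hb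
      · field_simp
    · intros; rfl
  rw [this]
  refine Finset.sum_congr rfl fun b _ => ?_
  rw [this]
  refine Finset.sum_congr rfl fun c _ => ?_
  have : (a - a * b) * (a * b - a * c) * (a * c - a) = a ^ 3 * ((1 - b) * (b - c) * (c - 1)) := by
    ring
  rw [this, map_mul, map_pow, hsq a ha]
  simp

theorem aux_card {F : Type} [Field F] [Fintype F] [DecidableEq F] (k : ℕ) (hk : k ≠ 0)
    (hsq : ∀ b : F, b ^ k = 1 → quadraticChar F b = 1) (w : F) (hw3 : w ^ 3 = 1) (hw1 : w ≠ 1)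
    (hwk : w ^ k = 1) (hm : quadraticChar F (-1) = 1) (ε : ℤ) (hε : ε ≠ 0) :
    (Finset.univ.filter fun x : F × F => (x.1 ^ k = 1 ∧ x.2 ^ k = 1) ∧
      quadraticChar F ((1 - x.1) * (x.1 - x.2) * (x.2 - 1)) = ε).card ≡
    (if quadraticChar F ((1 - w) * (w - w ^ 2) * (w ^ 2 - 1)) = ε then 2 else 0) [MOD 3] := by
  have ne0 : ∀ b : F, b ^ k = 1 → b ≠ 0 := by
    rintro b hb rfl
    simp [hk] at hb
  have hw0 := ne0 w hwk
  have hww : w ^ 2 + w + 1 = 0 := by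
    have : (w - 1) * (w ^ 2 + w + 1) = 0 := by linear_combination hw3
    exact (mul_eq_zero.1 this).resolve_left (sub_ne_zero.2 hw1)
  have hne : w ≠ w ^ 2 := by
    intro h
    apply hw1
    have : w * (w - 1) = 0 := by linear_combination -h
    exact sub_eq_zero.1 ((mul_eq_zero.1 this).resolve_left hw0)
  have hw2k : (w ^ 2) ^ k = 1 := by rw [← pow_mul, mul_comm, pow_mul, hwk, one_pow]
  rw [← Fintype.card_subtype]
  set α := {x : F × F // (x.1 ^ k = 1 ∧ x.2 ^ k = 1) ∧
      quadraticChar F ((1 - x.1) * (x.1 - x.2) * (x.2 - 1)) = ε} with hα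
  have hex : ∀ x : α, ∃ y : α, y.1 = (x.1.2 / x.1.1, 1 / x.1.1) := by
    intro x
    refine ⟨⟨(x.1.2 / x.1.1, 1 / x.1.1), ?_⟩, rfl⟩
    obtain ⟨⟨b, c⟩, ⟨hb, hc⟩, h⟩ := x
    simp only at hb hc h ⊢
    have hb0 := ne0 b hb
    refine ⟨⟨by rw [div_pow, hb, hc, div_one], by rw [div_pow, hb, one_pow, div_one]⟩, ?_⟩
    rw [← h]
    have e : (1 - b) * (b - c) * (c - 1)
      = b ^ 3 * ((1 - c / b) * (c / b - 1 / b) * (1 / b - 1)) := by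
      field_simp
    rw [e, map_mul _ (b ^ 3), map_pow, hsq b hb, one_pow, one_mul]
  choose r hrv using hex
  have hr : ∀ x, r (r (r x)) = x := by
    rintro ⟨⟨b, c⟩, ⟨hb, hc⟩, h⟩
    have hb0 := ne0 b hb
    have hc0 := ne0 c hc
    apply Subtype.ext
    simp only [hrv, Prod.mk.injEq]
    constructor <;> field_simp
  refine (aux_mod α r hr).trans (congrArg (· % 3) ?_)
  have hfix : ∀ x : α, r x = x ↔ (x.1 = (w, w ^ 2) ∨ x.1 = (w ^ 2, w)) := by
    rintro ⟨⟨b, c⟩, ⟨hb, hc⟩, h⟩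
    have hb0 := ne0 b hb
    have hc0 := ne0 c hc
    rw [Subtype.ext_iff]
    simp only [hrv, Prod.mk.injEq]
    constructor
    · rintro ⟨h1, h2⟩
      have hcb : c = b ^ 2 := by
        rw [div_eq_iff hb0] at h1
        rw [h1]; ring
      subst hcb
      have hb3 : b ^ 3 = 1 := by
        rw [div_eq_iff hb0] at h2
        rw [h2]; ring
      have hb1 : b ≠ 1 := by
        rintro rfl
        simp at h
        exact hε h.symm
      have hbb : b ^ 2 + b + 1 = 0 := by
        have : (b - 1) * (b ^ 2 + b + 1) = 0 := by linear_combination hb3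
        exact (mul_eq_zero.1 this).resolve_left (sub_ne_zero.2 hb1)
      have : (b - w) * (b - w ^ 2) = 0 := by linear_combination hbb - b * hww + hw3
      rcases mul_eq_zero.1 this with h | h
      · left
        rw [sub_eq_zero.1 h]; simp
      · right
        rw [sub_eq_zero.1 h]
        refine ⟨rfl, ?_⟩
        linear_combination w * hw3
    · rintro (⟨rfl, rfl⟩ | ⟨rfl, rfl⟩)
      · constructor
        · field_simp
        · rw [div_eq_iff hb0, ← hw3]; ring
      · constructor
        · rw [div_eq_iff hb0]; linear_combination -c * hw3
        · rw [div_eq_iff hb0, ← hw3]; ring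
  have hsym : quadraticChar F ((1 - w ^ 2) * (w ^ 2 - w) * (w - 1)) =
      quadraticChar F ((1 - w) * (w - w ^ 2) * (w ^ 2 - 1)) := by
    have e : (1 - w ^ 2) * (w ^ 2 - w) * (w - 1)
        = (-1) * ((1 - w) * (w - w ^ 2) * (w ^ 2 - 1)) := by ring
    rw [e, map_mul _ (-1), hm, one_mul]
  split_ifs with hE
  · rw [Finset.card_eq_two]
    refine ⟨⟨(w, w ^ 2), ⟨hwk, hw2k⟩, hE⟩, ⟨(w ^ 2, w), ⟨hw2k, hwk⟩, hsym.trans hE⟩, ?_, ?_⟩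
    · intro h
      exact hne (congrArg (fun x : α => x.1.1) h)
    · ext x
      simp only [Finset.mem_filter, Finset.mem_univ, true_and, hfix, Finset.mem_insert,
        Finset.mem_singleton]
      exact ⟨fun h => h.imp (fun h => Subtype.ext h) (fun h => Subtype.ext h),
        fun h => h.imp (fun h => congrArg Subtype.val h) (fun h => congrArg Subtype.val h)⟩
  · refine Finset.card_eq_zero.2 (Finset.eq_empty_of_forall_notMem ?_)
    intro x hx
    have hx := (hfix x).1 (Finset.mem_filter.1 hx).2
    have h := x.2.2
    revert hx
    rintro (h' | h')
    · rw [h'] at h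
      exact hE h
    · rw [h'] at h
      exact hE (hsym.symm.trans h)

/-- Claim 1 in the proof of Theorem 3.1: if `e = (q-1)/k` is even and `(q,k)`
gives a 3-design, then `3 ∤ k`. -/
theorem stmt_8 (F : Type) [Field F] [Fintype F] [DecidableEq F]
    (q k : ℕ) (hq : Fintype.card F = q) (hqodd : Odd q) (hq4 : q % 4 = 1)
    (hkdvd : k ∣ q - 1) (hk3 : 3 < k) (hkq : k < q - 1)
    (he : Even ((q - 1) / k))
    (hdes : gives3Design F k) :
    ¬ (3 ∣ k) := by
  intro h3
  have hcard : Nat.card Fˣ = q - 1 := by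
    rw [Nat.card_eq_fintype_card, Fintype.card_units, hq]
  have h2 : ringChar F ≠ 2 := by
    intro h
    have := FiniteField.even_card_of_char_two h
    omega
  have hk0 : k ≠ 0 := by omega
  have hsq : ∀ b : F, b ^ k = 1 → quadraticChar F b = 1 := by
    intro b hb
    have hb0 : b ≠ 0 := by
      rintro rfl
      simp [hk0] at hb
    rw [quadraticChar_one_iff_isSquare hb0, FiniteField.isSquare_iff h2 hb0, hq]
    obtain ⟨m, hm⟩ := he
    have e : q - 1 = k * (m + m) := by
      rw [← hm, Nat.mul_div_cancel' hkdvd]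
    have e2 : q / 2 = k * m := by
      have : k * (m + m) = 2 * (k * m) := by ring
      omega
    rw [e2, pow_mul, hb, one_pow]
  have hm : quadraticChar F (-1) = 1 := by
    rw [quadraticChar_one_iff_isSquare (by simp), FiniteField.isSquare_neg_one_iff, hq]
    omega
  have : Fact (Nat.Prime 3) := ⟨Nat.prime_three⟩
  obtain ⟨u, hu⟩ := exists_prime_orderOf_dvd_card' (G := Fˣ) 3 (by
    rw [hcard]
    exact h3.trans hkdvd)
  have hu3 : u ^ 3 = 1 := by rw [← hu]; exact pow_orderOf_eq_one u
  have huk : u ^ k = 1 := by rw [← orderOf_dvd_iff_pow_eq_one, hu]; exact h3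
  have hu1 : u ≠ 1 := by
    rintro rfl
    simp at hu
  have hw3 : (u : F) ^ 3 = 1 := by rw [← Units.val_pow_eq_pow_val, hu3, Units.val_one]
  have hwk : (u : F) ^ k = 1 := by rw [← Units.val_pow_eq_pow_val, huk, Units.val_one]
  have hw1 : (u : F) ≠ 1 := fun h => hu1 (Units.ext h)
  have hz := aux_design k h2 hdes
  rw [aux_norm k hk0 hsq] at hz
  have hμ : (Finset.univ.filter fun a : F => a ^ k = 1).card ≠ 0 := by
    rw [Finset.card_ne_zero]
    exact ⟨1, by simp⟩
  have hz := (mul_eq_zero.1 hz).resolve_left (by exact_mod_cast hμ)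
  rw [← Finset.sum_product'] at hz
  have hp := aux_card k hk0 hsq u hw3 hw1 hwk hm 1 (by simp)
  have hn := aux_card k hk0 hsq u hw3 hw1 hwk hm (-1) (by simp)
  have hs : ∀ x : F × F, quadraticChar F ((1 - x.1) * (x.1 - x.2) * (x.2 - 1)) =
      (if quadraticChar F ((1 - x.1) * (x.1 - x.2) * (x.2 - 1)) = 1 then 1 else 0) -
      (if quadraticChar F ((1 - x.1) * (x.1 - x.2) * (x.2 - 1)) = -1 then 1 else 0) := by
    intro x
    by_cases h : (1 - x.1) * (x.1 - x.2) * (x.2 - 1) = 0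
    · rw [h]; simp
    · rcases quadraticChar_dichotomy h with h | h <;> rw [h] <;> simp
  rw [Finset.sum_congr rfl (fun x _ => hs x), Finset.sum_sub_distrib, Finset.sum_boole,
    Finset.sum_boole, sub_eq_zero] at hz
  have hz := Int.ofNat_inj.1 hz
  have conv : ∀ ε : ℤ, (Finset.univ.filter fun x : F × F => (x.1 ^ k = 1 ∧ x.2 ^ k = 1) ∧
      quadraticChar F ((1 - x.1) * (x.1 - x.2) * (x.2 - 1)) = ε) =
      Finset.filter (fun x : F × F => quadraticChar F ((1 - x.1) * (x.1 - x.2) * (x.2 - 1)) = ε)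
        ((Finset.univ.filter fun a : F => a ^ k = 1) ×ˢ
          (Finset.univ.filter fun a : F => a ^ k = 1)) := by
    intro ε
    ext x
    simp
  rw [conv, hz] at hp
  rw [conv] at hn
  have hc := hp.symm.trans hn
  have hu0 : (u : F) ≠ 0 := u.ne_zero
  have hne : (1 - (u : F)) * (u - (u : F) ^ 2) * ((u : F) ^ 2 - 1) ≠ 0 := by
    have e : (1 - (u : F)) * (u - (u : F) ^ 2) * ((u : F) ^ 2 - 1)
        = u * (1 - u) ^ 2 * (u ^ 2 * (1 - u)) := by linear_combination (1 - (u : F)) ^ 2 * u * hw3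
    rw [e]
    have := sub_ne_zero.2 hw1.symm
    positivity
  rcases quadraticChar_dichotomy hne with h | h <;> rw [h] at hc <;> revert hc <;> decide
end
end

section
/- Let q be an odd prime power, let n be an even positive integer, and let k be a divisor of q−1 with 3 < k < q−1 and with (q^n−1)/k even. Then (q^n, k) does not give a 3-design, i.e., the PSL(2,q^n)-orbit of the subgroup of order k of F_{q^n}^× is not the block set of a 3-design on PG(1,q^n). -/
/-!
Setting: `F` is a finite field of order `q`. The projective line `PG(1,q)` is
modelled as `Projectivization F (Fin 2 → F)`. Since scalar matrices act trivially
on the projective line, the images of a set under all elements of `SL(2,F)` form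
exactly its `PSL(2,F)`-orbit; `mapSL g` is the map of the projective line induced
by `g : SL(2,F)`. For `k ∣ q - 1`, the unique subgroup of order `k` of `Fˣ` is the
set of `k`-th roots of unity `{x : F | x ^ k = 1}`, embedded into the projective
line via `x ↦ [x : 1]`. `(q, k)` gives a 3-design iff there is `lam > 0` such that
every 3-subset of the projective line lies in exactly `lam` blocks of the orbit.
-/

noncomputable section

open Matrix

lemma aux_pt {F : Type} [Field F] (g : Matrix.SpecialLinearGroup (Fin 2) F) (k : ℕ)
    (w : Fin 2 → F) (hw : w ≠ 0)
    (h : Projectivization.mk F w hw ∈ mapSL g '' starterB F k) :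
    ∃ x a : F, x ^ k = 1 ∧ w 0 = a * (g.1 0 0 * x + g.1 0 1) ∧ w 1 = a * (g.1 1 0 * x + g.1 1 1) := by
  obtain ⟨_, ⟨x, hx, rfl⟩, h⟩ := h
  unfold mapSL embedPt at h
  rw [Projectivization.map_mk] at h
  have h2 := (Projectivization.mk_eq_mk_iff' F _ _ _ _).1 h.symm
  obtain ⟨a, ha⟩ := h2
  refine ⟨x, a, hx, ?_, ?_⟩
  · have := congrFun ha 0
    simp [Matrix.SpecialLinearGroup.toLin'_apply, Matrix.toLin'_apply, Matrix.mulVec, dotProduct, Fin.sum_univ_two] at this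
    exact this.symm
  · have := congrFun ha 1
    simp [Matrix.SpecialLinearGroup.toLin'_apply, Matrix.toLin'_apply, Matrix.mulVec, dotProduct, Fin.sum_univ_two] at this
    exact this.symm

/-- Proposition 3.5: if `q` is an odd prime power, `n` is even and positive, and
`k ∣ q - 1` with `3 < k < q - 1` (and `(q^n - 1)/k` even), then `(q^n, k)` does not
give a 3-design (here `F'` is the field of order `q^n`). -/
theorem stmt_10 (F' : Type) [Field F'] [Fintype F'] [DecidableEq F']
    (q k n : ℕ) (hq' : Fintype.card F' = q ^ n)
    (hqpp : IsPrimePow q) (hqodd : Odd q)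
    (hn : Even n) (hn0 : 0 < n)
    (hkdvd : k ∣ q - 1) (hk3 : 3 < k) (hkq : k < q - 1)
    (he : Even ((q ^ n - 1) / k)) :
    ¬ gives3Design F' k := by
  rintro ⟨lam, hpos, hT⟩
  -- characteristic
  obtain ⟨p, j, hp, hj, hpj⟩ := hqpp
  have hp := hp.nat_prime
  obtain ⟨p', hchar⟩ := CharP.exists F'
  obtain ⟨m, hp', hcard⟩ := FiniteField.card F' p'
  have hpp : p' = p := by
    have h1 : p' ∣ q ^ n := by
      rw [← hq', hcard]; exact dvd_pow_self _ m.2.ne'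
    rw [← hpj] at h1
    exact (Nat.prime_dvd_prime_iff_eq hp' hp).1 (hp'.dvd_of_dvd_pow (hp'.dvd_of_dvd_pow h1))
  subst hpp
  haveI : Fact p'.Prime := ⟨hp⟩
  have hsub : ∀ x y : F', (x - y) ^ q = x ^ q - y ^ q := by
    intro x y; rw [← hpj]; exact sub_pow_char_pow (p := p') x y j
  have hp2 : ringChar F' ≠ 2 := by
    rw [ringChar.eq F' p']
    rintro rfl
    rw [← hpj] at hqodd
    have : Even (2 ^ j) := (even_two).pow_of_ne_zero hj.ne'
    exact (Nat.not_even_iff_odd.2 hqodd) this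
  obtain ⟨u, hu⟩ := FiniteField.exists_nonsquare hp2
  have hu0 : u ≠ 0 := by rintro rfl; exact hu (IsSquare.zero)
  have hroot : ∀ x : F', x ^ k = 1 → x ^ q = x := by
    intro x hx
    obtain ⟨c, hc⟩ := hkdvd
    have : q = (q - 1) + 1 := by omega
    rw [this, pow_succ, hc, pow_mul, hx, one_pow, one_mul]
  have hdvd : q - 1 ∣ q ^ n / 2 := by
    obtain ⟨t, rfl⟩ := hn
    obtain ⟨b, hb⟩ : 2 ∣ q ^ t + 1 := (hqodd.pow.add_one).two_dvd
    have h1 : q - 1 ∣ q ^ t - 1 := by simpa using Nat.sub_dvd_pow_sub_pow q 1 t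
    refine h1.trans ⟨b, ?_⟩
    have hb1 : q ^ t = 2 * b - 1 := by omega
    obtain ⟨d, rfl⟩ : ∃ d, b = d + 1 := ⟨b - 1, by omega⟩
    have hb2 : q ^ t = 2 * d + 1 := by omega
    rw [pow_add, hb2]
    have e : (2 * d + 1) * (2 * d + 1) = 2 * (2 * d * (d + 1)) + 1 := by ring
    rw [e]
    have : 2 * d + 1 - 1 = 2 * d := by omega
    rw [this]; omega
  have hsq : ∀ y : F', y ^ q = y → IsSquare y := by
    intro y hy
    by_cases h0 : y = 0
    · subst h0; exact IsSquare.zero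
    rw [FiniteField.isSquare_iff hp2 h0, hq']
    obtain ⟨c, hc⟩ := hdvd
    have h1 : y ^ (q - 1) = 1 := by
      have : q = (q - 1) + 1 := by omega
      rw [this, pow_succ] at hy
      exact mul_right_cancel₀ h0 (by rw [hy, one_mul])
    rw [hc, pow_mul, h1, one_pow]
  have n1 : (![1, 0] : Fin 2 → F') ≠ 0 := fun h => by simpa using congrFun h 0
  have n2 : (![0, 1] : Fin 2 → F') ≠ 0 := fun h => by simpa using congrFun h 1
  have n3 : (![-u, 1] : Fin 2 → F') ≠ 0 := fun h => by simpa using congrFun h 1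
  classical
  let P1 := Projectivization.mk F' _ n1
  let P2 := Projectivization.mk F' _ n2
  let P3 := Projectivization.mk F' _ n3
  have h12 : P1 ≠ P2 := by
    intro h
    obtain ⟨a, ha⟩ := (Projectivization.mk_eq_mk_iff' F' _ _ n1 n2).1 h
    simpa using congrFun ha 0
  have h13 : P1 ≠ P3 := by
    intro h
    obtain ⟨a, ha⟩ := (Projectivization.mk_eq_mk_iff' F' _ _ n1 n3).1 h
    have e0 := congrFun ha 0
    have e1 := congrFun ha 1
    simp at e0 e1
    simp [e1] at e0
  have h23 : P2 ≠ P3 := by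
    intro h
    obtain ⟨a, ha⟩ := (Projectivization.mk_eq_mk_iff' F' _ _ n2 n3).1 h
    have e0 := congrFun ha 0
    have e1 := congrFun ha 1
    simp at e0 e1
    simp [e1, hu0] at e0
  have hc := hT {P1, P2, P3} (Finset.card_eq_three.2 ⟨P1, P2, P3, h12, h13, h23, rfl⟩)
  have hne : {S ∈ designBlocks F' k | ((({P1, P2, P3} : Finset _)) : Set (Projectivization F' (Fin 2 → F'))) ⊆ S}.Nonempty := by
    apply Set.nonempty_of_ncard_ne_zero
    omega
  obtain ⟨S, ⟨g, rfl⟩, hS⟩ := hne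
  obtain ⟨x, a, hx, hx0, hx1⟩ := aux_pt g k _ n1 (hS (by simp [P1]))
  obtain ⟨y, b, hy, hy0, hy1⟩ := aux_pt g k _ n2 (hS (by simp [P2]))
  obtain ⟨z, c, hz, hz0, hz1⟩ := aux_pt g k _ n3 (hS (by simp [P3]))
  have hdet : g.1 0 0 * g.1 1 1 - g.1 0 1 * g.1 1 0 = 1 := by
    rw [← Matrix.det_fin_two]; exact g.2
  simp only [Matrix.cons_val_zero, Matrix.cons_val_one] at hx0 hx1 hy0 hy1 hz0 hz1
  generalize g.1 0 0 = A at *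
  generalize g.1 0 1 = B at *
  generalize g.1 1 0 = C at *
  generalize g.1 1 1 = D at *
  have e1 : (1 : F') = a * b * (x - y) := by
    linear_combination (a*b*(x-y)) * hdet + (1:F') * hx0 + (a * (A * x + B)) * hy1 - (b * (A * y + B)) * hx1
  have e2 : u = b * c * (y - z) := by
    linear_combination (b*c*(y-z)) * hdet - hz0 + hy0 + (b * (A * y + B)) * hz1 - (c * (A * z + B)) * hy1
  have e3 : (-1 : F') = c * a * (z - x) := by
    linear_combination (c*a*(z-x)) * hdet - hx0 + (c * (A * z + B)) * hx1 - (a * (A * x + B)) * hz1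
  have e4 : -u = (a * b * c) * (a * b * c) * ((x - y) * (y - z) * (z - x)) := by
    calc -u = 1 * u * (-1) := by ring
      _ = (a * b * (x - y)) * (b * c * (y - z)) * (c * a * (z - x)) := by rw [← e1, ← e2, ← e3]
      _ = _ := by ring
  have s1 : IsSquare ((x - y) * (y - z) * (z - x)) := by
    apply hsq
    rw [mul_pow, mul_pow, hsub, hsub, hsub, hroot x hx, hroot y hy, hroot z hz]
  have s2 : IsSquare (-1 : F') := by
    apply hsq
    exact hqodd.neg_one_pow
  apply hu
  have : u = (-1) * ((a * b * c) * (a * b * c) * ((x - y) * (y - z) * (z - x))) := by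
    rw [← e4]; ring
  rw [this]
  exact s2.mul ((IsSquare.mul_self _).mul s1)
end
end
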